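/- (Unachievable landmarks propagate to more concrete models.) Let M be a STRIPS planning model over fluents F, P ⊆ F, and φ : Set F → Prop. If no plan that is executable from I \ P in the projection f_P(M) ends in a state satisfying φ, then no plan that is executable from I in M ends in a state S with φ(S \ P). -/

import Mathlib

/-- A STRIPS planning model over fluents `F` and action labels `A`. -/
structure Strips (F : Type*) (A : Type*) where
  prec : A → Set F
  add : A → Set F
  del : A → Set F
  I : Set F
  G : Set F

/-- Result of applying action `a` in state `S`. -/
def Strips.res {F A : Type*} (M : Strips F A) (a : A) (S : Set F) : Set F :=
  (S \ M.del a) ∪ M.add a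

/-- The state trajectory `S₀, S₁, …, Sₙ` of a plan from a state. -/
def Strips.traj {F A : Type*} (M : Strips F A) : List A → Set F → List (Set F)
  | [], S => [S]
  | a :: π, S => S :: M.traj π (M.res a S)

/-- A plan is executable from `S` if each action's precondition holds when applied. -/
def Strips.exec {F A : Type*} (M : Strips F A) : List A → Set F → Prop
  | [], _ => True
  | a :: π, S => M.prec a ⊆ S ∧ M.exec π (M.res a S)

/-- The final state `Sₙ` of the trajectory of a plan from a state. -/
def Strips.finalState {F A : Type*} (M : Strips F A) (π : List A) (S : Set F) : Set F :=
  π.foldl (fun T a => M.res a T) S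

/-- The state `S_k` of the trajectory of a plan from a state. -/
def Strips.stateAt {F A : Type*} (M : Strips F A) (π : List A) (S : Set F) (k : ℕ) : Set F :=
  M.finalState (π.take k) S

/-- A plan is valid if it is executable from the initial state and achieves the goal. -/
def Strips.Valid {F A : Type*} (M : Strips F A) (π : List A) : Prop :=
  M.exec π M.I ∧ M.G ⊆ M.finalState π M.I

/-- The set `Π_M` of valid plans of `M`. -/
def Strips.Plans {F A : Type*} (M : Strips F A) : Set (List A) :=
  {π | M.Valid π}

/-- The projection `f_P(M)` of a model, projecting out the fluents in `P`. -/
def Strips.proj {F A : Type*} (M : Strips F A) (P : Set F) : Strips F A where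
  prec a := M.prec a \ P
  add a := M.add a \ P
  del a := M.del a \ P
  I := M.I \ P
  G := M.G \ P

/-
Deleting the fluents in `P` is a homomorphism of transition systems from `M` to its projection: it
commutes with every action and preserves preconditions. An executable plan of `M` is therefore
executable in the projection and ends there in the image of its final state.
-/

namespace Strips

variable {F A : Type*} (M : Strips F A) (P : Set F)

theorem res_proj_sdiff (a : A) (S : Set F) : (M.proj P).res a (S \ P) = M.res a S \ P :=
  calc
    (S \ P) \ (M.del a \ P) ∪ M.add a \ P
      = S \ (P ∪ M.del a) ∪ M.add a \ P := by rw [Set.sdiff_sdiff, Set.union_sdiff_self]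
    _ = (S \ M.del a) \ P ∪ M.add a \ P := by rw [Set.union_comm P, Set.sdiff_sdiff]
    _ = (S \ M.del a ∪ M.add a) \ P := Set.union_sdiff_distrib.symm

theorem finalState_proj_sdiff (π : List A) (S : Set F) :
    (M.proj P).finalState π (S \ P) = M.finalState π S \ P :=
  List.foldl_hom (· \ P) fun T a => M.res_proj_sdiff P a T

variable {M} in
theorem exec.proj_sdiff {π : List A} {S : Set F} (hπ : M.exec π S) :
    (M.proj P).exec π (S \ P) := by
  induction π generalizing S with
  | nil => trivial
  | cons a π ih =>
    obtain ⟨hprec, hexec⟩ := hπ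
    have htail : (M.proj P).exec π ((M.proj P).res a (S \ P)) := by
      rw [res_proj_sdiff]
      exact ih hexec
    exact ⟨Set.sdiff_subset_sdiff_left hprec, htail⟩

end Strips

theorem stmt11 {F A : Type*} (M : Strips F A) (P : Set F) (φ : Set F → Prop)
    (h : ∀ π : List A, (M.proj P).exec π (M.I \ P) →
           ¬ φ ((M.proj P).finalState π (M.I \ P))) :
    ∀ π : List A, M.exec π M.I → ¬ φ (M.finalState π M.I \ P) := by
  intro π hπ
  rw [← M.finalState_proj_sdiff P]
  exact h π (hπ.proj_sdiff P)
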